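/- arXiv:0804.1491 — 7 statements merged into one kernel-verified Lean document; each statement's English description precedes it below -/
import Mathlib

section
/- Let N be a normal subgroup of GAₙ containing all diagonal automorphisms. Then every tame automorphism belongs to N. -/
open MvPolynomial

/-- The group `GAₙ` of polynomial automorphisms of `kⁿ`, identified with the group of
`k`-algebra automorphisms of the polynomial ring `k[X₁,…,Xₙ]`; under this identification
composition of polynomial maps corresponds to reversed composition of algebra
automorphisms: `(F∘G)* = G* ∘ F*`. -/
abbrev PolyAut (k : Type*) [Field k] (n : ℕ) :=
  MvPolynomial (Fin n) k ≃ₐ[k] MvPolynomial (Fin n) k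

/-- `G` is diagonal if `G*(Xᵢ) = cᵢ Xᵢ` with all `cᵢ ≠ 0`. -/
def IsDiagonal {k : Type*} [Field k] {n : ℕ} (G : PolyAut k n) : Prop :=
  ∀ i : Fin n, ∃ c : k, c ≠ 0 ∧ G (X i) = C c * X i

/-- `G` is elementary if for some index `i`, `G*(Xᵢ) = Xᵢ + g` where `g` does not involve
`Xᵢ`, and `G*(Xⱼ) = Xⱼ` for `j ≠ i`. -/
def IsElementary {k : Type*} [Field k] {n : ℕ} (G : PolyAut k n) : Prop :=
  ∃ i : Fin n, ∃ g : MvPolynomial (Fin n) k, i ∉ g.vars ∧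
    G (X i) = X i + g ∧ ∀ j : Fin n, j ≠ i → G (X j) = X j

/-- `G` is affine if each `G*(Xᵢ)` has total degree at most 1. -/
def IsAffine {k : Type*} [Field k] {n : ℕ} (G : PolyAut k n) : Prop :=
  ∀ i : Fin n, (G (X i)).totalDegree ≤ 1

/-- `G` is tame if it lies in the subgroup of `GAₙ` generated by the affine and the
elementary automorphisms. -/
def IsTame {k : Type*} [Field k] {n : ℕ} (G : PolyAut k n) : Prop :=
  G ∈ Subgroup.closure {H : PolyAut k n | IsAffine H ∨ IsElementary H}

/-- The diagonal automorphism with coefficients `c`. -/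
noncomputable def diagAut {k : Type*} [Field k] {n : ℕ} (c : Fin n → k) (hc : ∀ i, c i ≠ 0) :
    PolyAut k n :=
  AlgEquiv.ofAlgHom (aeval fun i => C (c i) * X i) (aeval fun i => C (c i)⁻¹ * X i)
    (by
      ext1 i
      simp only [AlgHom.comp_apply, aeval_X, map_mul, algHom_C, AlgHom.id_apply, algebraMap_eq]
      rw [← mul_assoc, ← C_mul, inv_mul_cancel₀ (hc i), C_1, one_mul])
    (by
      ext1 i
      simp only [AlgHom.comp_apply, aeval_X, map_mul, algHom_C, AlgHom.id_apply, algebraMap_eq]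
      rw [← mul_assoc, ← C_mul, mul_inv_cancel₀ (hc i), C_1, one_mul])

theorem diagAut_X {k : Type*} [Field k] {n : ℕ} (c : Fin n → k) (hc : ∀ i, c i ≠ 0) (i : Fin n) :
    diagAut c hc (X i) = C (c i) * X i := by
  simp [diagAut]

theorem polyAut_ext {k : Type*} [Field k] {n : ℕ} {F G : PolyAut k n}
    (h : ∀ i, F (X i) = G (X i)) : F = G := by
  have : (F : MvPolynomial (Fin n) k →ₐ[k] MvPolynomial (Fin n) k) = G :=
    MvPolynomial.algHom_ext h
  ext1 p
  exact DFunLike.congr_fun this p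

/-- An automorphism fixing all variables of `g` fixes `g`. -/
theorem polyAut_fix {k : Type*} [Field k] {n : ℕ} (F : PolyAut k n)
    (g : MvPolynomial (Fin n) k) (h : ∀ i ∈ g.vars, F (X i) = X i) : F g = g := by
  have := MvPolynomial.hom_congr_vars
    (f₁ := (F : MvPolynomial (Fin n) k →+* MvPolynomial (Fin n) k))
    (f₂ := RingHom.id _) (p₁ := g) (p₂ := g) (by ext1 x; simpa using F.commutes x)
    (fun i hi _ => by simpa using h i hi) rfl
  simpa using this

theorem mem_of_relation {G : Type*} [Group G] {N : Subgroup G} (hN : N.Normal) {D E : G}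
    (hD : D ∈ N) (h : D * E * E = E * D) : E ∈ N := by
  have : E = (E⁻¹ * D⁻¹ * E⁻¹⁻¹) * D := by
    rw [inv_inv, mul_assoc, ← h]; group
  rw [this]
  exact N.mul_mem (hN.conj_mem _ (N.inv_mem hD) _) hD

theorem mem_of_elementary {k : Type*} [Field k] [CharZero k] {n : ℕ}
    {N : Subgroup (PolyAut k n)} (hN : N.Normal)
    (hdiag : ∀ D : PolyAut k n, IsDiagonal D → D ∈ N) (E : PolyAut k n) (hE : IsElementary E) :
    E ∈ N := by
  obtain ⟨i, g, hg, hi, hj⟩ := hE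
  have hc : ∀ j, (if j = i then (2 : k) else 1) ≠ 0 := by
    intro j; split_ifs <;> simp
  have hDX := diagAut_X _ hc
  refine mem_of_relation hN (hdiag _ fun j => ⟨_, hc j, hDX j⟩) ?_
  have hEg : E g = g := polyAut_fix E g fun j hjg => hj j fun h => hg (h ▸ hjg)
  have hDg : diagAut _ hc g = g := polyAut_fix _ g fun j hjg => by
    have : j ≠ i := fun h => hg (h ▸ hjg)
    rw [hDX]; simp [this]
  apply polyAut_ext
  intro j
  by_cases h : j = i
  · subst h
    simp only [AlgEquiv.mul_apply, hi, map_add, hEg, hDg, hDX, if_true, map_mul]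
    have : (C (2 : k) : MvPolynomial (Fin n) k) = 2 := map_ofNat C 2
    rw [this, map_ofNat]; ring
  · simp [AlgEquiv.mul_apply, hj j h, hDX, h]

theorem mem_of_translation {k : Type*} [Field k] [CharZero k] {n : ℕ}
    {N : Subgroup (PolyAut k n)} (hN : N.Normal)
    (hdiag : ∀ D : PolyAut k n, IsDiagonal D → D ∈ N) (E : PolyAut k n) (b : Fin n → k)
    (hE : ∀ i, E (X i) = X i + C (b i)) :
    E ∈ N := by
  have hc : ∀ j : Fin n, (2 : k) ≠ 0 := by simp
  have hDX := diagAut_X _ hc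
  have hC : ∀ (F : PolyAut k n) (a : k), F (C a) = C a := fun F a => F.commutes a
  refine mem_of_relation hN (hdiag _ fun j => ⟨_, hc j, hDX j⟩) ?_
  apply polyAut_ext
  intro j
  simp only [AlgEquiv.mul_apply, hE, map_add, hDX, map_mul, hC]
  have : (C (2 : k) : MvPolynomial (Fin n) k) = 2 := map_ofNat C 2
  rw [this]; ring

/-- The elementary automorphism attached to a transvection. -/
noncomputable def transvAut {k : Type*} [Field k] {n : ℕ} (i j : Fin n) (hij : i ≠ j) (c : k) :
    PolyAut k n :=
  AlgEquiv.ofAlgHom (aeval fun l => X l + if l = i then C c * X j else 0)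
    (aeval fun l => X l + if l = i then C (-c) * X j else 0)
    (by
      ext1 l
      by_cases h : l = i
      · simp [h, hij.symm, algHom_C]
      · simp [h])
    (by
      ext1 l
      by_cases h : l = i
      · simp [h, hij.symm, algHom_C]
      · simp [h])

theorem transvAut_X {k : Type*} [Field k] {n : ℕ} (i j : Fin n) (hij : i ≠ j) (c : k)
    (l : Fin n) : transvAut i j hij c (X l) = X l + if l = i then C c * X j else 0 := by
  simp [transvAut]

theorem exists_linear {k : Type*} [Field k] [CharZero k] {n : ℕ}
    {N : Subgroup (PolyAut k n)} (hN : N.Normal)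
    (hdiag : ∀ D : PolyAut k n, IsDiagonal D → D ∈ N) (A : Matrix (Fin n) (Fin n) k)
    (hA : A.det ≠ 0) : ∃ L ∈ N, ∀ i, L (X i) = ∑ j, C (A i j) * X j := by
  refine Matrix.diagonal_transvection_induction_of_det_ne_zero
    (fun A => ∃ L ∈ N, ∀ i, L (X i) = ∑ j, C (A i j) * X j) A hA ?_ ?_ ?_
  · intro d hd
    rw [Matrix.det_diagonal] at hd
    have hc : ∀ i, d i ≠ 0 := fun i => Finset.prod_ne_zero_iff.1 hd i (Finset.mem_univ i)
    refine ⟨diagAut d hc, hdiag _ fun j => ⟨_, hc j, diagAut_X d hc j⟩, fun i => ?_⟩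
    rw [diagAut_X, Finset.sum_eq_single i]
    · simp
    · intro j _ hj; simp [Matrix.diagonal_apply_ne' _ hj]
    · simp
  · intro t
    refine ⟨transvAut t.i t.j t.hij t.c, mem_of_elementary hN hdiag _
      ⟨t.i, C t.c * X t.j, ?_, ?_, ?_⟩, ?_⟩
    · intro h
      have := vars_mul _ _ h
      simp [vars_C, vars_X, t.hij] at this
    · simp [transvAut_X]
    · intro j hj; simp [transvAut_X, hj]
    · intro l
      rw [transvAut_X]
      simp only [Matrix.TransvectionStruct.toMatrix, Matrix.transvection, Matrix.add_apply,
        C_add, add_mul, Finset.sum_add_distrib]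
      congr 1
      · rw [Finset.sum_eq_single l]
        · simp
        · intro j _ hj; simp [Matrix.one_apply_ne' hj]
        · simp
      · rw [Finset.sum_eq_single t.j]
        · by_cases h : l = t.i
          · simp [h]
          · simp [h, Matrix.single_apply, Ne.symm h]
        · intro j _ hj; simp [Matrix.single_apply, hj.symm]
        · simp
  · intro A B hA' hB' ihA ihB
    obtain ⟨L, hL, hLX⟩ := ihA
    obtain ⟨M, hM, hMX⟩ := ihB
    have hC : ∀ (F : PolyAut k n) (a : k), F (C a) = C a := fun F a => F.commutes a
    refine ⟨M * L, N.mul_mem hM hL, fun i => ?_⟩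
    simp only [AlgEquiv.mul_apply, hLX, map_sum, map_mul, hMX, hC, Matrix.mul_apply,
      Finset.mul_sum, Finset.sum_mul]
    rw [Finset.sum_comm]
    simp only [mul_assoc]

theorem affine_expand {k : Type*} [Field k] {n : ℕ} (p : MvPolynomial (Fin n) k)
    (hp : p.totalDegree ≤ 1) :
    p = ∑ j, C (coeff (Finsupp.single j 1) p) * X j + C (coeff 0 p) := by
  ext m
  simp only [coeff_add, coeff_sum, coeff_C_mul, coeff_X, coeff_C]
  by_cases h0 : m = 0
  · subst h0
    simp
  by_cases h1 : ∃ j, m = Finsupp.single j 1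
  · obtain ⟨j, rfl⟩ := h1
    rw [Finset.sum_eq_single j]
    · simp [Ne.symm h0]
    · intro l _ hl
      simp [Finsupp.single_left_inj, hl]
    · simp
  · rw [Finset.sum_eq_zero, if_neg (Ne.symm h0), add_zero]
    · by_contra hne
      have hm := le_totalDegree (mem_support_iff.2 hne)
      have hd : m.degree ≤ 1 := by
        rw [Finsupp.degree_eq_sum]
        rw [Finsupp.sum_fintype _ _ (by simp)] at hm
        exact hm.trans hp
      rcases Nat.le_one_iff_eq_zero_or_eq_one.1 hd with h | h
      · exact h0 ((Finsupp.degree_eq_zero_iff m).1 h)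
      · exact h1 ((Finsupp.sum_eq_one_iff m).1 (by
          rw [Finsupp.sum_fintype _ _ (by simp), ← Finsupp.degree_eq_sum]
          exact h))
    · intro j _
      rw [if_neg fun h => h1 ⟨j, h.symm⟩, mul_zero]

theorem mem_of_affine {k : Type*} [Field k] [CharZero k] {n : ℕ}
    {N : Subgroup (PolyAut k n)} (hN : N.Normal)
    (hdiag : ∀ D : PolyAut k n, IsDiagonal D → D ∈ N) (F : PolyAut k n) (hF : IsAffine F) :
    F ∈ N := by
  have hC : ∀ (F : PolyAut k n) (a : k), F (C a) = C a := fun F a => F.commutes a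
  obtain ⟨A, hA⟩ : ∃ A : Matrix (Fin n) (Fin n) k,
    A = fun i j => coeff (Finsupp.single j 1) (F (X i)) := ⟨_, rfl⟩
  obtain ⟨b, hb⟩ : ∃ b : Fin n → k, b = fun i => coeff 0 (F (X i)) := ⟨_, rfl⟩
  have hFX : ∀ i, F (X i) = ∑ j, C (A i j) * X j + C (b i) := by
    intro i
    rw [hA, hb]
    exact affine_expand _ (hF i)
  have hdet : A.det ≠ 0 := by
    intro h
    obtain ⟨v, hv, hvA⟩ := Matrix.exists_vecMul_eq_zero_iff.2 h
    apply hv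
    have key : F (∑ i, C (v i) * X i) = F (C (∑ i, v i * b i)) := by
      simp only [map_sum, map_mul, hC, hFX, mul_add, Finset.sum_add_distrib, Finset.mul_sum]
      rw [Finset.sum_comm]
      rw [add_eq_right]
      refine Finset.sum_eq_zero fun j _ => ?_
      have := congrFun hvA j
      simp only [Matrix.vecMul, dotProduct, Pi.zero_apply] at this
      simp only [← mul_assoc, ← C_mul, ← Finset.sum_mul, ← map_sum, this, C_0, zero_mul]
    have key2 := F.injective key
    ext j
    have := congrArg (coeff (Finsupp.single j 1)) key2
    rw [coeff_sum, Finset.sum_eq_single j] at this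
    · rw [coeff_C, if_neg (Ne.symm (by simp))] at this
      simpa using this
    · intro l _ hl
      simp [coeff_C_mul, coeff_X, Finsupp.single_left_inj, hl]
    · simp
  obtain ⟨L, hL, hLX⟩ := exists_linear hN hdiag A hdet
  have hT : L⁻¹ * F ∈ N := by
    refine mem_of_translation hN hdiag _ b fun i => ?_
    rw [AlgEquiv.mul_apply, hFX, ← hLX, map_add, hC, ← AlgEquiv.mul_apply, inv_mul_cancel]
    rfl
  have := N.mul_mem hL hT
  rwa [mul_inv_cancel_left] at this

/-- Let `N` be a normal subgroup of `GAₙ` containing all diagonal automorphisms.  Then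
every tame automorphism belongs to `N`. -/
theorem tame_mem_normal_subgroup_of_diagonals (k : Type*) [Field k] [CharZero k] (n : ℕ)
    (hn : 1 ≤ n) (N : Subgroup (PolyAut k n)) (hN : N.Normal)
    (hdiag : ∀ D : PolyAut k n, IsDiagonal D → D ∈ N) :
    ∀ F : PolyAut k n, IsTame F → F ∈ N := by
  intro F hF
  refine (Subgroup.closure_le N).2 ?_ hF
  rintro H (h | h)
  · exact mem_of_affine hN hdiag H h
  · exact mem_of_elementary hN hdiag H h
end

section
/- Let F ∈ GAₙ be the elementary automorphism with F*(Xᵢ) = Xᵢ + g (g not involving Xᵢ) and F*(Xⱼ) = Xⱼ for j ≠ i, and let D ∈ GAₙ be the diagonal automorphism with D*(Xᵢ) = 2Xᵢ and D*(Xⱼ) = Xⱼ for j ≠ i. Then the algebra automorphisms satisfy (D*)⁻¹∘F*∘D* = F*∘F*; equivalently, as polynomial automorphisms, F = (F⁻¹∘D∘F)∘D⁻¹. -/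
open MvPolynomial

/-- Let `F` be the elementary automorphism with `F*(Xᵢ) = Xᵢ + g` (`g` not involving
`Xᵢ`), `F*(Xⱼ) = Xⱼ` for `j ≠ i`, and let `D` be the diagonal automorphism with
`D*(Xᵢ) = 2Xᵢ`, `D*(Xⱼ) = Xⱼ` for `j ≠ i`.  Then `(D*)⁻¹ ∘ F* ∘ D* = F* ∘ F*`;
equivalently, as polynomial maps, `F = (F⁻¹∘D∘F)∘D⁻¹`. -/
theorem elementary_conj_diagonal (k : Type*) [Field k] [CharZero k] (n : ℕ)
    (i : Fin n) (g : MvPolynomial (Fin n) k) (hg : i ∉ g.vars)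
    (F D : PolyAut k n)
    (hFi : F (X i) = X i + g) (hFj : ∀ j : Fin n, j ≠ i → F (X j) = X j)
    (hDi : D (X i) = 2 * X i) (hDj : ∀ j : Fin n, j ≠ i → D (X j) = X j) :
    D⁻¹ * F * D = F * F := by
  have key : ∀ A : PolyAut k n, (∀ j : Fin n, j ≠ i → A (X j) = X j) → A g = g := by
    intro A hA
    have h := hom_congr_vars (f₁ := (A : MvPolynomial (Fin n) k →+* MvPolynomial (Fin n) k))
      (f₂ := RingHom.id _) (p₁ := g) (p₂ := g) ?_ ?_ rfl
    · simpa using h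
    · refine RingHom.ext fun c => ?_
      exact A.commutes c
    · intro j hj _
      have hji : j ≠ i := fun e => hg (e ▸ hj)
      simpa using hA j hji
  have hFg := key F hFj
  have hDg := key D hDj
  rw [mul_assoc, inv_mul_eq_iff_eq_mul]
  apply AlgEquiv.coe_toAlgHom_injective
  apply MvPolynomial.algHom_ext
  intro j
  by_cases hj : j = i
  · subst hj
    have h2 : F 2 = 2 := map_ofNat F 2
    simp [hFi, hDi, hFg, hDg, h2]
    ring
  · simp [hFj j hj, hDj j hj]
end

section
/- For n ≥ 2, every elementary automorphism F ∈ GAₙ can be written as F = (E⁻¹∘D∘E)∘D⁻¹ (composition of polynomial automorphisms), where E is an elementary automorphism and D is a diagonal automorphism whose jacobian determinant equals 1. -/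
open MvPolynomial

/-- `G` is jacobian if the determinant of its jacobian matrix `(∂G*(Xᵢ)/∂Xⱼ)` equals 1. -/
def IsJacobian {k : Type*} [Field k] {n : ℕ} (G : PolyAut k n) : Prop :=
  (Matrix.of fun i j : Fin n => MvPolynomial.pderiv j (G (X i))).det = 1

theorem aux_fix {k : Type*} [Field k] {n : ℕ} (G : MvPolynomial (Fin n) k →ₐ[k] MvPolynomial (Fin n) k)
    (i : Fin n) (hG : ∀ j, j ≠ i → G (X j) = X j) (h : MvPolynomial (Fin n) k) (hh : i ∉ h.vars) :
    G h = h := by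
  have := MvPolynomial.hom_congr_vars (f₁ := (G : MvPolynomial (Fin n) k →+* MvPolynomial (Fin n) k))
    (f₂ := RingHom.id _) (p₁ := h) (p₂ := h) (by ext x; simp [← MvPolynomial.algebraMap_eq]) (by
      intro j hj _
      have : j ≠ i := by rintro rfl; exact hh hj
      simpa using hG j this) rfl
  simpa using this

theorem exists_elem {k : Type*} [Field k] {n : ℕ} (i : Fin n) (h : MvPolynomial (Fin n) k)
    (hh : i ∉ h.vars) : ∃ E : PolyAut k n, E (X i) = X i + h ∧ ∀ j, j ≠ i → E (X j) = X j := by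
  have key : ∀ u : MvPolynomial (Fin n) k, i ∉ u.vars →
      (aeval (R := k) (Function.update X i (X i + h))) u = u := fun u hu =>
    aux_fix _ i (fun j hj => by simp [hj]) u hu
  have key' : ∀ u : MvPolynomial (Fin n) k, i ∉ u.vars →
      (aeval (R := k) (Function.update X i (X i - h))) u = u := fun u hu =>
    aux_fix _ i (fun j hj => by simp [hj]) u hu
  refine ⟨AlgEquiv.ofAlgHom (aeval (Function.update X i (X i + h)))
    (aeval (Function.update X i (X i - h))) ?_ ?_, ?_, ?_⟩
  · apply MvPolynomial.algHom_ext
    intro j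
    by_cases hj : j = i
    · subst hj; have := key h hh; rw [aeval_eq_bind₁] at this; simp [this]
    · simp [hj]
  · apply MvPolynomial.algHom_ext
    intro j
    by_cases hj : j = i
    · subst hj; have := key' h hh; rw [aeval_eq_bind₁] at this; simp [this]
    · simp [hj]
  · simp
  · intro j hj; simp [hj]

theorem exists_diag {k : Type*} [Field k] {n : ℕ} (c : Fin n → k) (hc : ∀ i, c i ≠ 0) :
    ∃ D : PolyAut k n, ∀ i, D (X i) = C (c i) * X i := by
  refine ⟨AlgEquiv.ofAlgHom (aeval fun i => C (c i) * X i) (aeval fun i => C (c i)⁻¹ * X i)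
    ?_ ?_, ?_⟩
  · apply MvPolynomial.algHom_ext
    intro j
    simp [← MvPolynomial.algebraMap_eq]
    simp [MvPolynomial.algebraMap_eq, ← mul_assoc, ← C_mul, hc]
  · apply MvPolynomial.algHom_ext
    intro j
    simp [← MvPolynomial.algebraMap_eq]
    simp [MvPolynomial.algebraMap_eq, ← mul_assoc, ← C_mul, hc]
  · intro i; simp

theorem diag_monomial {k : Type*} [Field k] {n : ℕ} (c : Fin n → k) (D : PolyAut k n)
    (hD : ∀ i, D (X i) = C (c i) * X i) (a : Fin n →₀ ℕ) (r : k) :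
    D (monomial a r) = monomial a ((∏ j, c j ^ a j) * r) := by
  have hC : D (C r) = C r := D.commutes r
  rw [monomial_eq, monomial_eq, map_mul, hC, Finsupp.prod_fintype _ _ (by simp), map_prod, C_mul,
    map_prod]
  simp only [map_pow, hD, mul_pow, Finset.prod_mul_distrib]
  ring

/-- For `n ≥ 2`, every elementary automorphism `F` can be written as
`F = (E⁻¹∘D∘E)∘D⁻¹` (composition of polynomial maps) with `E` elementary and `D` diagonal
with jacobian determinant 1.  Under the identification with algebra automorphisms (where
polynomial-map composition is reversed), this reads `F = D⁻¹ * E * D * E⁻¹`. -/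
theorem elementary_eq_commutator (k : Type*) [Field k] [CharZero k] (n : ℕ) (hn : 2 ≤ n)
    (F : PolyAut k n) (hF : IsElementary F) :
    ∃ E D : PolyAut k n, IsElementary E ∧ IsDiagonal D ∧ IsJacobian D ∧
      F = D⁻¹ * E * D * E⁻¹ := by
  classical
  obtain ⟨i, g, hg, hFi, hFj⟩ := hF
  let c : Fin n → k := fun j => if j = i then ((2 : k) ^ (n - 1))⁻¹ else 2
  have hc : ∀ j, c j ≠ 0 := by
    intro j
    by_cases hj : j = i <;> simp [c, hj]
  have hci : c i = ((2 : k) ^ (n - 1))⁻¹ := by simp [c]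
  have hcj : ∀ j, j ≠ i → c j = 2 := fun j hj => by simp [c, hj]
  have hprod : ∏ j, c j = 1 := by
    rw [← Finset.mul_prod_erase _ _ (Finset.mem_univ i),
      Finset.prod_congr rfl (fun j hj => hcj j (Finset.ne_of_mem_erase hj)), hci]
    simp
  have hW : ∀ a ∈ g.support, c i - ∏ j, c j ^ a j ≠ 0 := by
    intro a ha h0
    have hai : a i = 0 := by
      by_contra hne
      exact hg ((mem_vars i).2 ⟨a, ha, by simpa using hne⟩)
    rw [← Finset.mul_prod_erase _ _ (Finset.mem_univ i), hai, pow_zero, one_mul,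
      Finset.prod_congr rfl (fun j hj => by rw [hcj j (Finset.ne_of_mem_erase hj)]),
      Finset.prod_pow_eq_pow_sum, hci, sub_eq_zero,
      inv_eq_iff_eq_inv, eq_comm, inv_eq_iff_eq_inv] at h0
    replace h0 : (2 : k) ^ (∑ j ∈ Finset.univ.erase i, a j + (n - 1)) = 1 := by
      rw [pow_add, h0]
      simp
    have h1 : (2 : ℕ) ^ (∑ j ∈ Finset.univ.erase i, a j + (n - 1)) = 1 := by exact_mod_cast h0
    rw [Nat.pow_eq_one] at h1
    omega
  obtain ⟨D, hD⟩ := exists_diag c hc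
  let h : MvPolynomial (Fin n) k := ∑ a ∈ g.support,
    monomial a ((c i - ∏ j, c j ^ a j)⁻¹ * (∏ j, c j ^ a j) * coeff a g)
  have hh : i ∉ h.vars := by
    intro hi
    have := MvPolynomial.vars_sum_subset _ _ hi
    rw [Finset.mem_biUnion] at this
    obtain ⟨a, ha, hia⟩ := this
    obtain ⟨b, hb, hib⟩ := (mem_vars i).1 hia
    have := support_monomial_subset hb
    rw [Finset.mem_singleton] at this
    subst this
    exact hg ((mem_vars i).2 ⟨b, ha, hib⟩)
  have hmain : D g + D h = C (c i) * h := by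
    conv_lhs => rw [g.as_sum]
    simp only [h, map_sum, diag_monomial c D hD, Finset.mul_sum, C_mul_monomial,
      ← Finset.sum_add_distrib, ← map_add]
    refine Finset.sum_congr rfl fun a ha => ?_
    congr 1
    have := hW a ha
    field_simp
    ring
  obtain ⟨E, hEi, hEj⟩ := exists_elem i h hh
  refine ⟨E, D, ⟨i, h, hh, hEi, hEj⟩, fun j => ⟨c j, hc j, hD j⟩, ?_, ?_⟩
  · have : (Matrix.of fun i j : Fin n => MvPolynomial.pderiv j (D (X i))) =
        Matrix.diagonal fun i => C (c i) := by
      ext1 a b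
      by_cases hab : a = b
      · subst hab; simp [hD]
      · simp [hD, hab, Pi.single_apply, pderiv_X]
    rw [IsJacobian, this, Matrix.det_diagonal, ← map_prod, hprod, C_1]
  · have hFh : F h = h := aux_fix (F : MvPolynomial (Fin n) k →ₐ[k] _) i hFj h hh
    have hEC : ∀ r : k, E (C r) = C r := fun r => E.commutes r
    have : D * F * E = E * D := by
      apply AlgEquiv.coe_algHom_injective
      apply MvPolynomial.algHom_ext
      intro j
      by_cases hj : j = i
      · subst hj
        simp only [AlgEquiv.coe_algHom, AlgEquiv.mul_apply, hEi, map_add, hFi, hFh, hD, map_mul,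
          hEC, add_assoc, hmain, mul_add]
      · simp [hEj j hj, hFj j hj, hD, hEC]
    rw [eq_mul_inv_iff_mul_eq, mul_assoc, eq_inv_mul_iff_mul_eq, ← mul_assoc] 
    exact this
end

section
/- Let N be a normal subgroup of GA₃ containing all diagonal automorphisms. Then the Nagata automorphism F, i.e. any F ∈ GA₃ with F*(X) = X − 2(Y²+XZ)Y − (Y²+XZ)²Z, F*(Y) = Y + (Y²+XZ)Z, F*(Z) = Z, belongs to N. -/
open MvPolynomial

/-- The group `GA₃` of polynomial automorphisms of `k³`, identified with the group of
`k`-algebra automorphisms of `k[X,Y,Z] = MvPolynomial (Fin 3) k` (with `X = X 0`,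
`Y = X 1`, `Z = X 2`). -/
abbrev PolyAut3 (k : Type*) [Field k] :=
  MvPolynomial (Fin 3) k ≃ₐ[k] MvPolynomial (Fin 3) k

/-- `G ∈ GA₃` is diagonal if `G*(X) = c₁X`, `G*(Y) = c₂Y`, `G*(Z) = c₃Z` with all
`cᵢ ≠ 0`. -/
def IsDiagonal3 {k : Type*} [Field k] (G : PolyAut3 k) : Prop :=
  ∀ i : Fin 3, ∃ c : k, c ≠ 0 ∧ G (X i) = C c * X i

/-- The diagonal automorphism `(4X, 2Y, Z)`. -/
noncomputable def nagataDiag (k : Type*) [Field k] [CharZero k] : PolyAut3 k :=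
  AlgEquiv.ofAlgHom
    (aeval ![C 4 * X 0, C 2 * X 1, X 2])
    (aeval ![C (4⁻¹) * X 0, C (2⁻¹) * X 1, X 2])
    (by
      ext i : 1
      fin_cases i <;> simp [← mul_assoc, ← C_mul, algebraMap_eq])
    (by
      ext i : 1
      fin_cases i <;> simp [← mul_assoc, ← C_mul, algebraMap_eq])

/-- Let `N` be a normal subgroup of `GA₃` containing all diagonal automorphisms.  Then
the Nagata automorphism `F`, with `F*(X) = X − 2(Y²+XZ)Y − (Y²+XZ)²Z`,
`F*(Y) = Y + (Y²+XZ)Z`, `F*(Z) = Z`, belongs to `N`. -/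
theorem nagata_mem_normal_subgroup (k : Type*) [Field k] [CharZero k]
    (N : Subgroup (PolyAut3 k)) (hN : N.Normal)
    (hdiag : ∀ D : PolyAut3 k, IsDiagonal3 D → D ∈ N)
    (F : PolyAut3 k)
    (hFX : F (X 0) = X 0 - 2 * ((X 1) ^ 2 + X 0 * X 2) * X 1
        - ((X 1) ^ 2 + X 0 * X 2) ^ 2 * X 2)
    (hFY : F (X 1) = X 1 + ((X 1) ^ 2 + X 0 * X 2) * X 2)
    (hFZ : F (X 2) = X 2) :
    F ∈ N := by
  have h0 : nagataDiag k (X 0) = C 4 * X 0 := by simp [nagataDiag]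
  have h1 : nagataDiag k (X 1) = C 2 * X 1 := by simp [nagataDiag]
  have h2 : nagataDiag k (X 2) = X 2 := by simp [nagataDiag]
  have hT : nagataDiag k ∈ N := by
    apply hdiag
    intro i
    fin_cases i
    · exact ⟨4, by norm_num, h0⟩
    · exact ⟨2, by norm_num, h1⟩
    · exact ⟨1, by norm_num, by simpa using h2⟩
  have c4 : (C 4 : MvPolynomial (Fin 3) k) = 4 := map_ofNat C 4
  have c2 : (C 2 : MvPolynomial (Fin 3) k) = 2 := map_ofNat C 2
  rw [c4] at h0
  rw [c2] at h1
  have key : nagataDiag k * F = F * F * nagataDiag k := by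
    apply AlgEquiv.coe_toAlgHom_injective
    ext i : 1
    change nagataDiag k (F (X i)) = F (F (nagataDiag k (X i)))
    fin_cases i
    · simp only [Fin.zero_eta, hFX, hFY, hFZ, h0, h1, h2, map_sub, map_add, map_mul, map_pow,
        map_ofNat]
      ring
    · simp only [Fin.mk_one, hFX, hFY, hFZ, h0, h1, h2, map_sub, map_add, map_mul, map_pow,
        map_ofNat]
      ring
    · simp only [Fin.reduceFinMk, hFZ, h2]
  have hF : F = F⁻¹ * nagataDiag k * F⁻¹⁻¹ * (nagataDiag k)⁻¹ := by
    rw [inv_inv, mul_assoc F⁻¹, key]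
    group
  rw [hF]
  exact N.mul_mem (hN.conj_mem _ hT _) (N.inv_mem hT)
end

section
/- Let σ := Y² + XZ ∈ k[X,Y,Z]. The k-algebra endomorphism φ of k[X,Y,Z] with φ(X) = X − 2σY − σ²Z, φ(Y) = Y + σZ, φ(Z) = Z and the k-algebra endomorphism ψ with ψ(X) = X + 2σY − σ²Z, ψ(Y) = Y − σZ, ψ(Z) = Z satisfy φ∘ψ = id and ψ∘φ = id; in particular the Nagata map defines an automorphism of k[X,Y,Z] with inverse corresponding to the polynomial map (X+2σY−σ²Z, Y−σZ, Z). -/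
open MvPolynomial

/-- Write `k[X,Y,Z] = MvPolynomial (Fin 3) k` with `X = X 0`, `Y = X 1`, `Z = X 2`;
a triple of polynomials `(G₁,G₂,G₃)` determines the `k`-algebra endomorphism
`aeval ![G₁,G₂,G₃]` sending `X ↦ G₁`, `Y ↦ G₂`, `Z ↦ G₃`.

Let `σ = Y² + XZ`.  The endomorphism `φ` given by
`(X − 2σY − σ²Z, Y + σZ, Z)` (the Nagata map) and the endomorphism `ψ` given by
`(X + 2σY − σ²Z, Y − σZ, Z)` satisfy `φ∘ψ = id` and `ψ∘φ = id`; in particular the Nagata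
map is an automorphism of `k[X,Y,Z]` with inverse corresponding to
`(X + 2σY − σ²Z, Y − σZ, Z)`. -/
theorem nagata_inverse (k : Type*) [Field k] [CharZero k]
    (σ : MvPolynomial (Fin 3) k) (hσ : σ = (X 1) ^ 2 + X 0 * X 2)
    (φ ψ : MvPolynomial (Fin 3) k →ₐ[k] MvPolynomial (Fin 3) k)
    (hφ : φ = aeval ![X 0 - 2 * σ * X 1 - σ ^ 2 * X 2, X 1 + σ * X 2, X 2])
    (hψ : ψ = aeval ![X 0 + 2 * σ * X 1 - σ ^ 2 * X 2, X 1 - σ * X 2, X 2]) :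
    φ.comp ψ = AlgHom.id k (MvPolynomial (Fin 3) k) ∧
      ψ.comp φ = AlgHom.id k (MvPolynomial (Fin 3) k) := by
  have f0 : φ (X 0) = X 0 - 2 * σ * X 1 - σ ^ 2 * X 2 := by rw [hφ, aeval_X]; rfl
  have f1 : φ (X 1) = X 1 + σ * X 2 := by rw [hφ, aeval_X]; rfl
  have f2 : φ (X 2) = X 2 := by rw [hφ, aeval_X]; rfl
  have g0 : ψ (X 0) = X 0 + 2 * σ * X 1 - σ ^ 2 * X 2 := by rw [hψ, aeval_X]; rfl
  have g1 : ψ (X 1) = X 1 - σ * X 2 := by rw [hψ, aeval_X]; rfl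
  have g2 : ψ (X 2) = X 2 := by rw [hψ, aeval_X]; rfl
  have fs : φ σ = σ := by
    have h : φ σ = φ (X 1) ^ 2 + φ (X 0) * φ (X 2) := by
      conv_lhs => rw [hσ]
      simp only [map_add, map_mul, map_pow]
    rw [h, f0, f1, f2]
    linear_combination -hσ
  have gs : ψ σ = σ := by
    have h : ψ σ = ψ (X 1) ^ 2 + ψ (X 0) * ψ (X 2) := by
      conv_lhs => rw [hσ]
      simp only [map_add, map_mul, map_pow]
    rw [h, g0, g1, g2]
    linear_combination -hσ
  clear hσ hφ hψ
  constructor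
  · apply MvPolynomial.algHom_ext
    intro i
    rw [AlgHom.comp_apply, AlgHom.id_apply]
    fin_cases i
    · change φ (ψ (X 0)) = X 0
      simp only [g0, map_add, map_sub, map_mul, map_pow, map_ofNat, fs, f0, f1, f2]
      ring
    · change φ (ψ (X 1)) = X 1
      simp only [g1, map_sub, map_mul, fs, f1, f2]
      ring
    · change φ (ψ (X 2)) = X 2
      rw [g2, f2]
  · apply MvPolynomial.algHom_ext
    intro i
    rw [AlgHom.comp_apply, AlgHom.id_apply]
    fin_cases i
    · change ψ (φ (X 0)) = X 0
      simp only [f0, map_sub, map_mul, map_pow, map_ofNat, gs, g0, g1, g2]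
      ring
    · change ψ (φ (X 1)) = X 1
      simp only [f1, map_add, map_mul, gs, g1, g2]
      ring
    · change ψ (φ (X 2)) = X 2
      rw [f2, g2]
end

section
/- Let σ := Y² + XZ ∈ k[X,Y,Z], let φ be the k-algebra endomorphism of k[X,Y,Z] with φ(X) = X − 2σY − σ²Z, φ(Y) = Y + σZ, φ(Z) = Z (the Nagata map), and let λ be the k-algebra endomorphism with λ(X) = ¼X, λ(Y) = ½Y, λ(Z) = Z. Then φ∘λ = λ∘φ∘φ. Equivalently, for the corresponding polynomial automorphisms F and L one has F = (F⁻¹∘L∘F)∘L⁻¹. -/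
open MvPolynomial

/-- Write `k[X,Y,Z] = MvPolynomial (Fin 3) k` with `X = X 0`, `Y = X 1`, `Z = X 2`;
a triple of polynomials `(G₁,G₂,G₃)` determines the `k`-algebra endomorphism
`aeval ![G₁,G₂,G₃]` sending `X ↦ G₁`, `Y ↦ G₂`, `Z ↦ G₃`; under this correspondence
composition of polynomial maps corresponds to reversed composition of algebra
endomorphisms: `(F∘G)* = G* ∘ F*`.

Let `σ = Y² + XZ`, let `φ` be the Nagata endomorphism `(X − 2σY − σ²Z, Y + σZ, Z)` and
let `lam` be the endomorphism `(¼X, ½Y, Z)`.  Then `φ ∘ lam = lam ∘ φ ∘ φ`; equivalently,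
for the corresponding polynomial automorphisms `F` and `L` one has
`F = (F⁻¹∘L∘F)∘L⁻¹`. -/
theorem nagata_conjugation_identity (k : Type*) [Field k] [CharZero k]
    (σ : MvPolynomial (Fin 3) k) (hσ : σ = (X 1) ^ 2 + X 0 * X 2)
    (φ lam : MvPolynomial (Fin 3) k →ₐ[k] MvPolynomial (Fin 3) k)
    (hφ : φ = aeval ![X 0 - 2 * σ * X 1 - σ ^ 2 * X 2, X 1 + σ * X 2, X 2])
    (hlam : lam = aeval ![C (1 / 4 : k) * X 0, C (1 / 2 : k) * X 1, X 2]) :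
    φ.comp lam = lam.comp (φ.comp φ) := by
  have h4 : (C (1 / 4 : k) : MvPolynomial (Fin 3) k) = C (1 / 2 : k) ^ 2 := by
    rw [← C_pow]; congr 1; norm_num
  have h2 : (2 : MvPolynomial (Fin 3) k) * C (1 / 2 : k) = 1 := by
    have : (2 : MvPolynomial (Fin 3) k) = C (2 : k) := (map_ofNat C 2).symm
    rw [this, ← C_mul, ← C_1]; congr 1; norm_num
  rw [h4] at hlam
  have hC : ∀ (f : MvPolynomial (Fin 3) k →ₐ[k] MvPolynomial (Fin 3) k) (a : k),
      f (C a) = C a := fun f a => f.commutes a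
  generalize hc : (C (1 / 2 : k) : MvPolynomial (Fin 3) k) = c at *
  have φ0 : φ (X 0) = X 0 - 2 * σ * X 1 - σ ^ 2 * X 2 := by rw [hφ]; simp
  have φ1 : φ (X 1) = X 1 + σ * X 2 := by rw [hφ]; simp
  have φ2 : φ (X 2) = X 2 := by rw [hφ]; simp
  have l0 : lam (X 0) = c ^ 2 * X 0 := by rw [hlam]; simp
  have l1 : lam (X 1) = c * X 1 := by rw [hlam]; simp
  have l2 : lam (X 2) = X 2 := by rw [hlam]; simp
  have φc : φ c = c := by rw [← hc]; exact hC _ _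
  have φσ : φ σ = σ := by
    have : φ σ = φ (X 1) ^ 2 + φ (X 0) * φ (X 2) := by
      conv_lhs => rw [hσ]
      simp only [map_add, map_mul, map_pow]
    rw [this, φ0, φ1, φ2]
    linear_combination -hσ
  have lσ : lam σ = c ^ 2 * σ := by
    have : lam σ = lam (X 1) ^ 2 + lam (X 0) * lam (X 2) := by
      conv_lhs => rw [hσ]
      simp only [map_add, map_mul, map_pow]
    rw [this, l0, l1, l2]
    linear_combination -c ^ 2 * hσ
  clear hφ hlam hσ
  apply MvPolynomial.algHom_ext
  intro i
  fin_cases i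
  · simp only [AlgHom.comp_apply, Fin.zero_eta, l0, φ0, map_sub, map_add, map_mul, map_pow,
      map_ofNat, φ1, φ2, l1, l2, φc, φσ, lσ]
    linear_combination (2 * c ^ 2 * σ * X 1 + c ^ 2 * σ ^ 2 * X 2) * (2 * c + 1) * h2 - 4 * c ^ 3 * σ * X 1 * h2
  · simp only [AlgHom.comp_apply, Fin.mk_one, l0, φ0, map_sub, map_add, map_mul, map_pow,
      map_ofNat, φ1, φ2, l1, l2, φc, φσ, lσ]
    linear_combination -c * σ * X 2 * h2
  · simp only [AlgHom.comp_apply, Fin.reduceFinMk, l2, φ2]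
end

section
/- Every tame automorphism of kⁿ belongs to the subgroup 𝓕ₙ of GAₙ generated by the locally finite automorphisms. -/
open MvPolynomial

/-- `G ∈ GAₙ` is locally finite if for every polynomial `f` the `k`-vector subspace
spanned by the iterates `{(G*)^m f : m ∈ ℕ}` is finite dimensional. -/
def IsLocallyFinite {k : Type*} [Field k] {n : ℕ} (G : PolyAut k n) : Prop :=
  ∀ f : MvPolynomial (Fin n) k,
    FiniteDimensional k (Submodule.span k (Set.range fun m : ℕ => (G ^ m) f))

/-- If an algebra automorphism sends the variables to polynomials of degree at most `D`, it
multiplies degrees by at most `D`. -/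
theorem totalDegree_polyAut_le {k : Type*} [Field k] {n : ℕ} (G : PolyAut k n) (D : ℕ)
    (h : ∀ i, (G (X i)).totalDegree ≤ D) (f : MvPolynomial (Fin n) k) :
    (G f).totalDegree ≤ D * f.totalDegree := by
  conv_lhs => rw [f.as_sum, map_sum]
  refine totalDegree_finsetSum_le fun s hs => ?_
  have h1 : G (monomial s (coeff s f)) = C (coeff s f) * ∏ i, G (X i) ^ s i := by
    rw [monomial_eq, map_mul, Finsupp.prod_fintype _ _ (by simp), map_prod]
    simp only [map_pow]
    congr 1
    exact G.commutes _
  rw [h1]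
  refine (totalDegree_mul _ _).trans ?_
  rw [totalDegree_C, zero_add]
  refine (totalDegree_finset_prod _ _).trans ?_
  have h2 : ∀ i ∈ Finset.univ, (G (X i) ^ s i).totalDegree ≤ D * s i := fun i _ =>
    (totalDegree_pow _ _).trans (by rw [mul_comm]; exact Nat.mul_le_mul_right _ (h i))
  refine (Finset.sum_le_sum h2).trans ?_
  rw [← Finset.mul_sum]
  refine Nat.mul_le_mul_left _ ?_
  have h3 := le_totalDegree hs
  rwa [Finsupp.sum_fintype _ _ (by simp)] at h3

/-- An automorphism whose iterates have bounded degree is locally finite. -/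
theorem isLocallyFinite_of_bounded {k : Type*} [Field k] {n : ℕ} (G : PolyAut k n) (D : ℕ)
    (h : ∀ (m : ℕ) i, ((G ^ m) (X i)).totalDegree ≤ D) : IsLocallyFinite G := by
  intro f
  have hle : Submodule.span k (Set.range fun m : ℕ => (G ^ m) f) ≤
      restrictTotalDegree (Fin n) k (D * f.totalDegree) := by
    rw [Submodule.span_le]
    rintro _ ⟨m, rfl⟩
    exact (mem_restrictTotalDegree _ _ _).2 (totalDegree_polyAut_le _ D (h m) f)
  exact Submodule.finiteDimensional_of_le hle

theorem IsAffine.isLocallyFinite {k : Type*} [Field k] {n : ℕ} {G : PolyAut k n}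
    (hG : IsAffine G) : IsLocallyFinite G := by
  refine isLocallyFinite_of_bounded G 1 fun m i => ?_
  induction m with
  | zero => simp
  | succ m ih =>
    rw [pow_succ', AlgEquiv.mul_apply]
    exact (totalDegree_polyAut_le G 1 hG _).trans (by omega)

theorem IsElementary.isLocallyFinite {k : Type*} [Field k] {n : ℕ} {G : PolyAut k n}
    (hG : IsElementary G) : IsLocallyFinite G := by
  obtain ⟨i, g, hg, hi, hj⟩ := hG
  have hgg : G g = g := by
    refine hom_congr_vars (f₁ := (G : MvPolynomial (Fin n) k →+* MvPolynomial (Fin n) k))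
      (f₂ := RingHom.id _) (p₁ := g) (p₂ := g) ?_ ?_ rfl
    · ext1 c
      exact G.commutes c
    · intro j h1 _
      exact hj j (fun h => hg (h ▸ h1))
  refine isLocallyFinite_of_bounded G (max 1 g.totalDegree) fun m j => ?_
  by_cases h : j = i
  · subst h
    have key : (G ^ m) (X j) = X j + C (m : k) * g := by
      induction m with
      | zero => simp
      | succ m ih =>
        have hc : G (C (m : k)) = C (m : k) := G.commutes _
        rw [pow_succ', AlgEquiv.mul_apply, ih, map_add, map_mul, hc, hgg, hi]
        push_cast
        rw [C_add, C_1]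
        ring
    rw [key]
    refine (totalDegree_add _ _).trans (max_le_max (by simp) ?_)
    refine (totalDegree_mul _ _).trans ?_
    rw [totalDegree_C, zero_add]
  · have key : (G ^ m) (X j) = X j := by
      induction m with
      | zero => simp
      | succ m ih => rw [pow_succ', AlgEquiv.mul_apply, ih, hj j h]
    rw [key]
    simp

/-- Every tame automorphism of `kⁿ` belongs to the subgroup `𝓕ₙ` of `GAₙ` generated by
the locally finite automorphisms. -/
theorem tame_mem_locallyFinite_closure (k : Type*) [Field k] [CharZero k] (n : ℕ)
    (hn : 1 ≤ n) (F : PolyAut k n) (hF : IsTame F) :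
    F ∈ Subgroup.closure {G : PolyAut k n | IsLocallyFinite G} := by
  unfold IsTame at hF
  refine Subgroup.closure_mono ?_ hF
  rintro H (hH | hH)
  · exact hH.isLocallyFinite
  · exact hH.isLocallyFinite
end
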